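/- Let ν be a real number with ν ≥ 1 and let k ≥ 1. Then J_{ν−1}(z) + J_ν(z) ≠ 0 for every z in the closed interval [j_{ν,k}, j_{ν−1,k+1}], where j_{ν,k} is the k-th positive zero of J_ν and j_{ν−1,k+1} is the (k+1)-th positive zero of J_{ν−1}. -/

import Mathlib

/-- Bessel function of the first kind of real order `ν`, defined via its power series
`J_ν(z) = ∑ₘ (−1)^m / (m! Γ(ν+m+1)) (z/2)^(ν+2m)` (with real-exponent powers). -/
noncomputable def besselJ (ν z : ℝ) : ℝ :=
  ∑' m : ℕ, ((-1 : ℝ) ^ m / (Nat.factorial m * Real.Gamma (ν + m + 1))) *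
    (z / 2) ^ (ν + 2 * (m : ℝ))

/-- `x` (indexed by `k ≥ 1`) enumerates the positive zeroes of `f`: it is strictly
increasing on indices `k ≥ 1`, each `x k` is a positive zero of `f`, and every positive
zero of `f` is some `x k`. -/
def EnumPosZeros (f : ℝ → ℝ) (x : ℕ → ℝ) : Prop :=
  StrictMonoOn x (Set.Ici 1) ∧ (∀ k, 1 ≤ k → 0 < x k ∧ f (x k) = 0) ∧
    ∀ z : ℝ, 0 < z → f z = 0 → ∃ k, 1 ≤ k ∧ x k = z

/-!
By Rolle's theorem, the identities `(z ^ ν J_ν)' = z ^ ν J_{ν-1}` and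
`(z ^ (-ν) J_ν)' = -z ^ (-ν) J_{ν+1}` make the positive zeroes of `J_{ν-1}` and `J_ν` interlace:
`j_{ν-1,k} < j_{ν,k} < j_{ν-1,k+1}`. Hence `J_{ν-1}` has constant sign on
`[j_{ν,k}, j_{ν-1,k+1})`, and since `z ^ ν J_ν` starts from `0` at `j_{ν,k}` with derivative
`z ^ ν J_{ν-1}`, the function `J_ν` has that same sign on `(j_{ν,k}, j_{ν-1,k+1}]`. So the two terms
of the sum never have opposite signs and never vanish together.
-/

open Set Filter Real
open scoped Nat

theorem mul_pos_of_isPreconnected_of_ne_zero {X : Type*} [TopologicalSpace X] {s : Set X}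
    {f : X → ℝ} (hs : IsPreconnected s) (hf : ContinuousOn f s) (hne : ∀ x ∈ s, f x ≠ 0)
    {x y : X} (hx : x ∈ s) (hy : y ∈ s) : 0 < f x * f y := by
  by_contra! hle
  have hzero : (0 : ℝ) ∈ uIcc (f x) (f y) := by
    rcases mul_nonpos_iff.1 hle with h | h
    · exact mem_uIcc.2 (Or.inr h.symm)
    · exact mem_uIcc.2 (Or.inl h)
  obtain ⟨c, hc, hfc⟩ := (hs.image f hf).ordConnected.uIcc_subset
    (mem_image_of_mem f hx) (mem_image_of_mem f hy) hzero
  exact hne c hc hfc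

namespace EnumPosZeros

variable {f : ℝ → ℝ} {x y : ℕ → ℝ} {k : ℕ}

theorem pos (hx : EnumPosZeros f x) (hk : 1 ≤ k) : 0 < x k := (hx.2.1 k hk).1

theorem apply_eq_zero (hx : EnumPosZeros f x) (hk : 1 ≤ k) : f (x k) = 0 := (hx.2.1 k hk).2

theorem lt_succ (hx : EnumPosZeros f x) (hk : 1 ≤ k) : x k < x (k + 1) :=
  hx.1 hk (Nat.le_succ_of_le hk) k.lt_succ_self

theorem first_le_of_zero (hx : EnumPosZeros f x) {z : ℝ} (hz : 0 < z) (hfz : f z = 0) :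
    x 1 ≤ z := by
  obtain ⟨j, hj, rfl⟩ := hx.2.2 z hz hfz
  exact hx.1.monotoneOn self_mem_Ici hj hj

theorem succ_le_of_zero (hx : EnumPosZeros f x) (hk : 1 ≤ k) {z : ℝ} (hlt : x k < z)
    (hfz : f z = 0) : x (k + 1) ≤ z := by
  obtain ⟨j, hj, rfl⟩ := hx.2.2 z ((hx.pos hk).trans hlt) hfz
  exact hx.1.monotoneOn (Nat.le_succ_of_le hk) hj ((hx.1.lt_iff_lt hk hj).1 hlt)

theorem ne_zero_of_mem_Ioo (hx : EnumPosZeros f x) (hk : 1 ≤ k) {z : ℝ}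
    (hz : z ∈ Ioo (x k) (x (k + 1))) : f z ≠ 0 :=
  fun hfz => (hx.succ_le_of_zero hk hz.1 hfz).not_gt hz.2

theorem lt_of_exists_zero_between (hx : EnumPosZeros f x) (hone : x 1 < y 1)
    (hbetween : ∀ k, 1 ≤ k → ∃ c ∈ Ioo (y k) (y (k + 1)), f c = 0) (hk : 1 ≤ k) :
    x k < y k := by
  induction k, hk using Nat.le_induction with
  | base => exact hone
  | succ k hk ih =>
    obtain ⟨c, hc, hfc⟩ := hbetween k hk
    exact (hx.succ_le_of_zero hk (ih.trans hc.1) hfc).trans_lt hc.2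

end EnumPosZeros

theorem inv_realGamma_eq_mul_inv_realGamma_add_one (s : ℝ) :
    (Gamma s)⁻¹ = s * (Gamma (s + 1))⁻¹ := by
  rcases eq_or_ne s 0 with rfl | hs
  · simp
  · rw [Gamma_add_one hs, mul_inv, mul_inv_cancel_left₀ hs]

/-- The `m`-th Taylor coefficient `1 / (m! Γ(μ+m+1))` of the Bessel–Clifford function of order `μ`.
At a pole of `Γ` the conventions `Γ = 0` and `0⁻¹ = 0` give the value `0` of the entire function
`1 / Γ`. -/
noncomputable def besselCliffordCoeff (μ : ℝ) (m : ℕ) : ℝ := (m ! * Gamma (μ + m + 1))⁻¹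

/-- The Bessel–Clifford function of order `μ`, the entire function for which
`J_μ(z) = (z/2) ^ μ * besselClifford μ (-(z/2) ^ 2)`. -/
noncomputable def besselClifford (μ x : ℝ) : ℝ := ∑' m : ℕ, besselCliffordCoeff μ m * x ^ m

section BesselClifford

variable (μ x : ℝ) (m : ℕ)

theorem succ_mul_besselCliffordCoeff_succ :
    (m + 1) * besselCliffordCoeff μ (m + 1) = besselCliffordCoeff (μ + 1) m := by
  have hm : (m : ℝ) + 1 ≠ 0 := m.cast_add_one_ne_zero
  rw [besselCliffordCoeff, besselCliffordCoeff, Nat.factorial_succ, Nat.cast_mul, Nat.cast_succ,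
    mul_assoc, mul_inv, mul_inv_cancel_left₀ hm, add_right_comm μ 1, ← add_assoc μ]

theorem add_mul_besselCliffordCoeff :
    (μ + m) * besselCliffordCoeff μ m = besselCliffordCoeff (μ - 1) m := by
  rw [besselCliffordCoeff, besselCliffordCoeff, mul_inv, mul_inv,
    show μ - 1 + m + 1 = μ + m by ring, inv_realGamma_eq_mul_inv_realGamma_add_one (μ + m)]
  ring

theorem eventually_abs_besselCliffordCoeff_le :
    ∀ᶠ m : ℕ in atTop, |besselCliffordCoeff μ m| ≤ (m ! : ℝ)⁻¹ := by
  filter_upwards [tendsto_natCast_atTop_atTop.eventually_ge_atTop (1 - μ)] with m hm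
  have htwo : 2 ≤ μ + m + 1 := by linarith
  have hGamma : 1 ≤ Gamma (μ + m + 1) :=
    Gamma_two.symm.trans_le (Gamma_strictMonoOn_Ici.monotoneOn self_mem_Ici htwo htwo)
  rw [besselCliffordCoeff, abs_of_nonneg (by positivity)]
  exact inv_anti₀ (by positivity) (le_mul_of_one_le_right (by positivity) hGamma)

theorem summable_besselClifford : Summable fun m => besselCliffordCoeff μ m * x ^ m := by
  refine Summable.of_norm_bounded_eventually_nat (summable_pow_div_factorial |x|) ?_
  filter_upwards [eventually_abs_besselCliffordCoeff_le μ] with m hm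
  rw [norm_mul, norm_pow, norm_eq_abs, norm_eq_abs, div_eq_inv_mul]
  gcongr

theorem hasSum_besselClifford :
    HasSum (fun m => besselCliffordCoeff μ m * x ^ m) (besselClifford μ x) :=
  (summable_besselClifford μ x).hasSum

theorem besselClifford_eq_add_tsum_succ :
    besselClifford μ x =
      besselCliffordCoeff μ 0 + ∑' m : ℕ, besselCliffordCoeff μ (m + 1) * x ^ (m + 1) := by
  rw [besselClifford, (summable_besselClifford μ x).tsum_eq_zero_add, pow_zero, mul_one]

theorem hasDerivAt_besselCliffordCoeff_mul_pow_succ :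
    HasDerivAt (fun x => besselCliffordCoeff μ (m + 1) * x ^ (m + 1))
      (besselCliffordCoeff (μ + 1) m * x ^ m) x := by
  refine ((hasDerivAt_pow (m + 1) x).const_mul _).congr_deriv ?_
  rw [← succ_mul_besselCliffordCoeff_succ, Nat.cast_succ, Nat.add_sub_cancel]
  ring

theorem hasDerivAt_besselClifford :
    HasDerivAt (besselClifford μ) (besselClifford (μ + 1) x) x := by
  have hderiv : HasDerivAt (fun x => ∑' m : ℕ, besselCliffordCoeff μ (m + 1) * x ^ (m + 1))
      (besselClifford (μ + 1) x) x := by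
    refine hasDerivAt_tsum_of_isPreconnected (t := Metric.ball 0 (|x| + 1)) (y₀ := 0)
      (summable_besselClifford (μ + 1) (|x| + 1)).norm Metric.isOpen_ball
      (convex_ball _ _).isPreconnected
      (fun m y _ => hasDerivAt_besselCliffordCoeff_mul_pow_succ μ y m) (fun m y hy => ?_)
      (Metric.mem_ball_self (by positivity)) (by simp) (by simp)
    have hy : ‖y‖ ≤ ‖|x| + 1‖ := (mem_ball_zero_iff.1 hy).le.trans (le_norm_self _)
    rw [norm_mul, norm_mul, norm_pow, norm_pow]
    gcongr
  rw [funext (besselClifford_eq_add_tsum_succ μ)]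
  exact hderiv.const_add _

theorem continuous_besselClifford : Continuous (besselClifford μ) :=
  continuous_iff_continuousAt.2 fun x => (hasDerivAt_besselClifford μ x).continuousAt

theorem hasSum_natCast_mul_besselClifford :
    HasSum (fun m : ℕ => m * (besselCliffordCoeff μ m * x ^ m))
      (x * besselClifford (μ + 1) x) := by
  rw [← hasSum_nat_add_iff' 1]
  simp only [Finset.range_one, Finset.sum_singleton, Nat.cast_zero, zero_mul, sub_zero]
  refine ((hasSum_besselClifford (μ + 1) x).mul_left x).congr_fun fun m => ?_
  rw [← succ_mul_besselCliffordCoeff_succ]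
  push_cast
  ring

theorem besselClifford_recurrence :
    besselClifford (μ - 1) x = μ * besselClifford μ x + x * besselClifford (μ + 1) x := by
  refine (hasSum_besselClifford (μ - 1) x).unique ?_
  refine (((hasSum_besselClifford μ x).mul_left μ).add
    (hasSum_natCast_mul_besselClifford μ x)).congr_fun fun m => ?_
  rw [← add_mul_besselCliffordCoeff]
  ring

end BesselClifford

section BesselJ

variable {ν z : ℝ}

theorem besselJ_eq_rpow_mul_besselClifford (ν : ℝ) (hz : 0 < z) :
    besselJ ν z = (z / 2) ^ ν * besselClifford ν (-(z / 2) ^ 2) := by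
  rw [besselJ, besselClifford, ← tsum_mul_left]
  refine tsum_congr fun m => ?_
  have hpow : (z / 2) ^ (ν + 2 * (m : ℝ)) = (z / 2) ^ ν * ((z / 2) ^ 2) ^ m := by
    rw [rpow_add (by positivity), ← pow_mul, ← rpow_natCast]
    push_cast
    rfl
  rw [hpow, besselCliffordCoeff, neg_pow ((z / 2) ^ 2)]
  ring

theorem besselJ_zero_right (hν : 0 < ν) : besselJ ν 0 = 0 := by
  have hterm (m : ℕ) : ((0 : ℝ) / 2) ^ (ν + 2 * (m : ℝ)) = 0 := by
    rw [zero_div, zero_rpow (by positivity)]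
  simp only [besselJ, hterm, mul_zero, tsum_zero]

theorem besselJ_recurrence (ν : ℝ) (hz : 0 < z) :
    besselJ (ν - 1) z + besselJ (ν + 1) z = 2 * ν / z * besselJ ν z := by
  have hz2 : z / 2 ≠ 0 := by positivity
  rw [besselJ_eq_rpow_mul_besselClifford _ hz, besselJ_eq_rpow_mul_besselClifford _ hz,
    besselJ_eq_rpow_mul_besselClifford _ hz, besselClifford_recurrence, rpow_sub_one hz2,
    rpow_add_one hz2]
  field_simp
  ring

theorem hasDerivAt_besselJ (ν : ℝ) (hz : 0 < z) :
    HasDerivAt (besselJ ν) (ν / z * besselJ ν z - besselJ (ν + 1) z) z := by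
  have hz2 : z / 2 ≠ 0 := by positivity
  have hhalf : HasDerivAt (fun z : ℝ => z / 2) (1 / 2) z := (hasDerivAt_id z).div_const 2
  have hprod := (hhalf.rpow_const (p := ν) (Or.inl hz2)).mul
    ((hasDerivAt_besselClifford ν (-(z / 2) ^ 2)).comp z (hhalf.pow 2).neg)
  have heq : besselJ ν =ᶠ[nhds z] fun z => (z / 2) ^ ν * besselClifford ν (-(z / 2) ^ 2) :=
    (eventually_gt_nhds hz).mono fun _ => besselJ_eq_rpow_mul_besselClifford ν
  refine (hprod.congr_of_eventuallyEq heq).congr_deriv ?_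
  rw [besselJ_eq_rpow_mul_besselClifford _ hz, besselJ_eq_rpow_mul_besselClifford _ hz,
    rpow_sub_one hz2, rpow_add_one hz2]
  simp only [Function.comp_apply, Pi.neg_apply, Pi.pow_apply]
  field_simp
  ring

theorem continuousOn_besselJ (ν : ℝ) : ContinuousOn (besselJ ν) (Ioi 0) :=
  fun _ hz => (hasDerivAt_besselJ ν hz).continuousAt.continuousWithinAt

theorem hasDerivAt_rpow_mul_besselJ (ν : ℝ) (hz : 0 < z) :
    HasDerivAt (fun z => z ^ ν * besselJ ν z) (z ^ ν * besselJ (ν - 1) z) z := by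
  refine ((hasDerivAt_rpow_const (Or.inl hz.ne')).mul (hasDerivAt_besselJ ν hz)).congr_deriv ?_
  rw [eq_sub_of_add_eq (besselJ_recurrence ν hz), rpow_sub_one hz.ne']
  ring

theorem hasDerivAt_rpow_neg_mul_besselJ (ν : ℝ) (hz : 0 < z) :
    HasDerivAt (fun z => z ^ (-ν) * besselJ ν z) (-(z ^ (-ν) * besselJ (ν + 1) z)) z := by
  refine ((hasDerivAt_rpow_const (Or.inl hz.ne')).mul (hasDerivAt_besselJ ν hz)).congr_deriv ?_
  rw [rpow_sub_one hz.ne']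
  ring

theorem continuousOn_rpow_mul_besselJ (hν : 0 < ν) :
    ContinuousOn (fun z => z ^ ν * besselJ ν z) (Ici 0) := by
  have hcont : Continuous fun z : ℝ =>
      z ^ ν * ((z / 2) ^ ν * besselClifford ν (-(z / 2) ^ 2)) :=
    (continuous_id.rpow_const fun _ => Or.inr hν.le).mul
      (((continuous_id.div_const 2).rpow_const fun _ => Or.inr hν.le).mul
        ((continuous_besselClifford ν).comp (by fun_prop)))
  refine hcont.continuousOn.congr fun z hz => ?_
  rcases (mem_Ici.1 hz).eq_or_lt with rfl | hz
  · simp only [zero_rpow hν.ne', zero_mul]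
  · simp only [besselJ_eq_rpow_mul_besselClifford ν hz]

theorem exists_besselJ_sub_one_eq_zero {a b : ℝ} (hν : 0 < ν) (ha : 0 ≤ a) (hab : a < b)
    (hJa : besselJ ν a = 0) (hJb : besselJ ν b = 0) :
    ∃ c ∈ Ioo a b, besselJ (ν - 1) c = 0 := by
  obtain ⟨c, hc, hderiv⟩ := exists_hasDerivAt_eq_zero hab
    ((continuousOn_rpow_mul_besselJ hν).mono fun z hz => ha.trans hz.1)
    (by simp only [hJa, hJb, mul_zero])
    fun z hz => hasDerivAt_rpow_mul_besselJ ν (ha.trans_lt hz.1)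
  have hpow : c ^ ν ≠ 0 := (rpow_pos_of_pos (ha.trans_lt hc.1) ν).ne'
  exact ⟨c, hc, (mul_eq_zero.1 hderiv).resolve_left hpow⟩

theorem exists_besselJ_add_one_eq_zero {a b : ℝ} (ν : ℝ) (ha : 0 < a) (hab : a < b)
    (hJa : besselJ ν a = 0) (hJb : besselJ ν b = 0) :
    ∃ c ∈ Ioo a b, besselJ (ν + 1) c = 0 := by
  obtain ⟨c, hc, hderiv⟩ := exists_hasDerivAt_eq_zero hab
    (fun z hz => (hasDerivAt_rpow_neg_mul_besselJ ν
      (ha.trans_le hz.1)).continuousAt.continuousWithinAt)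
    (by simp only [hJa, hJb, mul_zero])
    fun z hz => hasDerivAt_rpow_neg_mul_besselJ ν (ha.trans hz.1)
  have hpow : c ^ (-ν) ≠ 0 := (rpow_pos_of_pos (ha.trans hc.1) (-ν)).ne'
  exact ⟨c, hc, (mul_eq_zero.1 (neg_eq_zero.1 hderiv)).resolve_left hpow⟩

theorem besselJ_sub_one_mul_besselJ_pos {a : ℝ} (ha : 0 < a) (hJa : besselJ ν a = 0)
    (haz : a < z) (hne : ∀ y ∈ Ioc a z, besselJ (ν - 1) y ≠ 0) :
    0 < besselJ (ν - 1) z * besselJ ν z := by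
  have hz : 0 < z := ha.trans haz
  obtain ⟨c, hc, hslope⟩ := exists_hasDerivAt_eq_slope (fun z => z ^ ν * besselJ ν z) _ haz
    (fun y hy => (hasDerivAt_rpow_mul_besselJ ν
      (ha.trans_le hy.1)).continuousAt.continuousWithinAt)
    fun y hy => hasDerivAt_rpow_mul_besselJ ν (ha.trans hy.1)
  have hc0 : 0 < c := ha.trans hc.1
  have hza : 0 < z - a := sub_pos.2 haz
  have hsign : 0 < besselJ (ν - 1) z * besselJ (ν - 1) c :=
    mul_pos_of_isPreconnected_of_ne_zero isPreconnected_Ioc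
      ((continuousOn_besselJ (ν - 1)).mono fun y hy => ha.trans hy.1) hne
      (right_mem_Ioc.2 haz) (Ioo_subset_Ioc_self hc)
  have hJz : besselJ ν z = c ^ ν * (z - a) / z ^ ν * besselJ (ν - 1) c := by
    rw [hJa, mul_zero, sub_zero, eq_div_iff hza.ne'] at hslope
    rw [div_mul_eq_mul_div, eq_div_iff (rpow_pos_of_pos hz ν).ne']
    linarith
  rw [hJz, mul_left_comm]
  positivity

end BesselJ

section Interlacing

variable {ν : ℝ} {a b : ℕ → ℝ} {k : ℕ}

theorem besselJ_sub_one_zero_lt_besselJ_zero (hν : 0 < ν)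
    (ha : EnumPosZeros (besselJ (ν - 1)) a) (hb : EnumPosZeros (besselJ ν) b) (hk : 1 ≤ k) :
    a k < b k := by
  refine ha.lt_of_exists_zero_between ?_ (fun k hk => ?_) hk
  · obtain ⟨c, hc, hJc⟩ := exists_besselJ_sub_one_eq_zero hν le_rfl (hb.pos le_rfl)
      (besselJ_zero_right hν) (hb.apply_eq_zero le_rfl)
    exact (ha.first_le_of_zero hc.1 hJc).trans_lt hc.2
  · exact exists_besselJ_sub_one_eq_zero hν (hb.pos hk).le (hb.lt_succ hk)
      (hb.apply_eq_zero hk) (hb.apply_eq_zero (Nat.le_succ_of_le hk))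

theorem besselJ_zero_lt_besselJ_sub_one_zero_succ
    (ha : EnumPosZeros (besselJ (ν - 1)) a) (hb : EnumPosZeros (besselJ ν) b) (hk : 1 ≤ k) :
    b k < a (k + 1) := by
  have hbetween (k : ℕ) (hk : 1 ≤ k) : ∃ c ∈ Ioo (a k) (a (k + 1)), besselJ ν c = 0 := by
    simpa only [sub_add_cancel] using exists_besselJ_add_one_eq_zero (ν - 1) (ha.pos hk)
      (ha.lt_succ hk) (ha.apply_eq_zero hk) (ha.apply_eq_zero (Nat.le_succ_of_le hk))
  refine hb.lt_of_exists_zero_between (y := fun k => a (k + 1)) ?_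
    (fun k _ => hbetween (k + 1) k.succ_pos) hk
  obtain ⟨c, hc, hJc⟩ := hbetween 1 le_rfl
  exact (hb.first_le_of_zero ((ha.pos le_rfl).trans hc.1) hJc).trans_lt hc.2

end Interlacing

theorem stmt12_general (ν : ℝ) (hν : 0 < ν) (k : ℕ) (hk : 1 ≤ k)
    (jm1 jn : ℕ → ℝ)
    (hjm1 : EnumPosZeros (besselJ (ν - 1)) jm1)
    (hjn : EnumPosZeros (besselJ ν) jn) :
    ∀ z ∈ Set.Icc (jn k) (jm1 (k + 1)), besselJ (ν - 1) z + besselJ ν z ≠ 0 := by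
  intro z hz
  have hk' : 1 ≤ k + 1 := Nat.le_succ_of_le hk
  have hlt : jm1 k < jn k := besselJ_sub_one_zero_lt_besselJ_zero hν hjm1 hjn hk
  have hlt' : jm1 (k + 1) < jn (k + 1) := besselJ_sub_one_zero_lt_besselJ_zero hν hjm1 hjn hk'
  have hgt : jn k < jm1 (k + 1) := besselJ_zero_lt_besselJ_sub_one_zero_succ hjm1 hjn hk
  rcases hz.1.eq_or_lt with rfl | hzl
  · rw [hjn.apply_eq_zero hk, add_zero]
    exact hjm1.ne_zero_of_mem_Ioo hk ⟨hlt, hgt⟩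
  rcases hz.2.eq_or_lt with rfl | hzr
  · rw [hjm1.apply_eq_zero hk', zero_add]
    exact hjn.ne_zero_of_mem_Ioo hk ⟨hgt, hlt'⟩
  have hsign : 0 < besselJ (ν - 1) z * besselJ ν z :=
    besselJ_sub_one_mul_besselJ_pos (hjn.pos hk) (hjn.apply_eq_zero hk) hzl fun y hy =>
      hjm1.ne_zero_of_mem_Ioo hk ⟨hlt.trans hy.1, hy.2.trans_lt hzr⟩
  intro hsum
  rw [eq_neg_of_add_eq_zero_left hsum, neg_mul, neg_pos] at hsign
  exact (mul_self_nonneg _).not_gt hsign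

/-- For `ν ≥ 1` and `k ≥ 1`, `J_{ν−1}(z) + J_ν(z) ≠ 0` on
`[j_{ν,k}, j_{ν−1,k+1}]`. -/
theorem stmt12 (ν : ℝ) (hν : 1 ≤ ν) (k : ℕ) (hk : 1 ≤ k)
    (jm1 jn : ℕ → ℝ)
    (hjm1 : EnumPosZeros (besselJ (ν - 1)) jm1)
    (hjn : EnumPosZeros (besselJ ν) jn) :
    ∀ z ∈ Set.Icc (jn k) (jm1 (k + 1)), besselJ (ν - 1) z + besselJ ν z ≠ 0 :=
  stmt12_general ν (zero_lt_one.trans_le hν) k hk jm1 jn hjm1 hjn
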